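/- Let $(\mathfrak{a}, \mathfrak{m})$ be a complete local ring and $f = f_0 + f_1 X + \cdots + f_d X^d \in \mathfrak{a}[X]$ a polynomial not all of whose coefficients lie in $\mathfrak{m}$. Let $k$ be the largest index with $f_k \notin \mathfrak{m}$. Then there exist a monic polynomial $q \in \mathfrak{a}[X]$ of degree $k$ and a polynomial $u = u_0 + u_1 X + \cdots + u_{d-k} X^{d-k} \in \mathfrak{a}[X]$ with $u_0 \notin \mathfrak{m}$ and $u_i \in \mathfrak{m}$ for all $i \geq 1$, such that $f = u q$. -/

import Mathlib

open Polynomial IsLocalRing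

/-- If a polynomial `g` is a distinguished polynomial `P` times a power series `h`, then `h` is
the polynomial `g /ₘ P`. -/
theorem Polynomial.IsDistinguishedAt.coe_divByMonic_eq {A : Type*} [CommRing A] {I : Ideal A}
    [IsHausdorff I A] (hI : I ≠ ⊤) {g P : A[X]} (hP : P.IsDistinguishedAt I) {h : PowerSeries A}
    (hg : (g : PowerSeries A) = P * h) : ((g /ₘ P : A[X]) : PowerSeries A) = h := by
  have : Nontrivial A := ⟨0, 1, fun h01 ↦ hI (I.eq_top_iff_one.2 (h01 ▸ I.zero_mem))⟩
  have hord : P.natDegree = _ := congr(ENat.toNat $(hP.coe_natDegree_eq_order_map P 1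
    (by simpa [← Ideal.ne_top_iff_one]) (by simp)))
  refine (hP.isWeierstrassDivisorAt'.eq_of_mul_add_eq_mul_add (r := g %ₘ P) (r' := 0) ?_ ?_ ?_).1
  · rw [← hord, ← degree_eq_natDegree hP.monic.ne_zero]
    exact degree_modByMonic_lt g hP.monic
  · rw [degree_zero]
    exact WithBot.bot_lt_coe _
  · rw [coe_zero, add_zero, ← hg, ← coe_mul, ← coe_add, add_comm, modByMonic_add_div]

/-- Weierstrass preparation for a polynomial `g` over a complete local ring: the unit factor is
a polynomial. -/
theorem Polynomial.exists_isDistinguishedAt_mul_eq {A : Type*} [CommRing A] [IsLocalRing A]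
    [IsAdicComplete (maximalIdeal A) A] {g : A[X]} {n : ℕ} (hn : g.coeff n ∉ maximalIdeal A)
    (hlt : ∀ i < n, g.coeff i ∈ maximalIdeal A) :
    ∃ P h : A[X], P.IsDistinguishedAt (maximalIdeal A) ∧ P.natDegree = n ∧
      h.natDegree = g.natDegree - n ∧ IsUnit (h.coeff 0) ∧ g = P * h := by
  have hord : ((g : PowerSeries A).map (residue A)).order = n := by
    rw [PowerSeries.order_eq_nat]
    simpa [residue_eq_zero_iff] using (And.intro hn hlt :)
  have hne : (g : PowerSeries A).map (residue A) ≠ 0 := by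
    rw [← PowerSeries.order_finite_iff_ne_zero, hord]
    exact ENat.natCast_lt_top n
  obtain ⟨P, h, H⟩ := PowerSeries.exists_isWeierstrassFactorization hne
  have hP := H.isDistinguishedAt
  have hdeg : P.natDegree = n := by
    rw [H.natDegree_eq_toNat_order_map, hord, ENat.toNat_natCast]
  have hdiv := hP.coe_divByMonic_eq (Ideal.IsPrime.ne_top inferInstance) H.eq_mul
  refine ⟨P, g /ₘ P, hP, hdeg, by rw [natDegree_divByMonic g hP.monic, hdeg], ?_, ?_⟩
  · rw [← coeff_coe, hdiv, PowerSeries.coeff_zero_eq_constantCoeff_apply]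
    exact PowerSeries.isUnit_iff_constantCoeff.1 H.isUnit
  · apply coe_injective A
    rw [coe_mul, hdiv, H.eq_mul]

/-- Weierstrass preparation for polynomials, existence. -/
theorem stmt_6 (A : Type*) [CommRing A] [IsLocalRing A]
    [IsAdicComplete (maximalIdeal A) A]
    (f : A[X]) (K : ℕ)
    (hK : f.coeff K ∉ maximalIdeal A)
    (hK' : ∀ i, K < i → f.coeff i ∈ maximalIdeal A) :
    ∃ q u : A[X],
      q.Monic ∧ q.natDegree = K ∧
      u.natDegree ≤ f.natDegree - K ∧
      u.coeff 0 ∉ maximalIdeal A ∧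
      (∀ i, 1 ≤ i → u.coeff i ∈ maximalIdeal A) ∧
      f = u * q := by
  have hKN : K ≤ f.natDegree := le_natDegree_of_ne_zero fun h ↦ hK (h ▸ Ideal.zero_mem _)
  obtain ⟨n, hn⟩ := Nat.exists_eq_add_of_le' hKN
  have hgn : (f.reflect (n + K)).coeff n ∉ maximalIdeal A := by
    rwa [coeff_reflect, revAt_le (by lia), Nat.add_sub_cancel_left]
  have hglt (i : ℕ) (hi : i < n) : (f.reflect (n + K)).coeff i ∈ maximalIdeal A := by
    rw [coeff_reflect, revAt_le (by lia)]
    exact hK' _ (by lia)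
  obtain ⟨P, h, hP, hPdeg, hhdeg, ⟨w, hw⟩, hg⟩ := exists_isDistinguishedAt_mul_eq hgn hglt
  have hhK : h.natDegree ≤ K := by
    have := natDegree_reflect_le (N := n + K) (p := f)
    lia
  have hqdeg : (C (↑w⁻¹ : A) * h.reflect K).natDegree ≤ K :=
    (natDegree_C_mul_le _ _).trans (natDegree_reflect_le.trans (by lia))
  have hqcoeff : (C (↑w⁻¹ : A) * h.reflect K).coeff K = 1 := by
    rw [coeff_C_mul, coeff_reflect, revAt_le le_rfl, Nat.sub_self, ← hw, Units.inv_mul]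
  refine ⟨C (↑w⁻¹ : A) * h.reflect K, C (w : A) * P.reflect n,
    monic_of_natDegree_le_of_coeff_eq_one K hqdeg hqcoeff,
    natDegree_eq_of_le_of_coeff_ne_zero hqdeg (by simp [hqcoeff]),
    (natDegree_C_mul_le _ _).trans (natDegree_reflect_le.trans (by lia)), ?_, fun i hi ↦ ?_, ?_⟩
  · rw [coeff_C_mul, coeff_reflect, revAt_zero, ← hPdeg, hP.monic.coeff_natDegree, mul_one,
      notMem_maximalIdeal]
    exact w.isUnit
  · rw [coeff_C_mul, coeff_reflect]
    refine Ideal.mul_mem_left _ _ ?_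
    rcases le_or_gt i n with hin | hin
    · rw [revAt_le hin]
      exact hP.mem (by lia)
    · rw [revAt_eq_self_of_lt hin, coeff_eq_zero_of_natDegree_lt (by lia)]
      exact Ideal.zero_mem _
  · rw [mul_mul_mul_comm, ← C_mul, Units.mul_inv, C_1, one_mul,
      ← reflect_mul P h hPdeg.le hhK, ← hg, reflect_reflect]
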